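/- Let g be a simple Lie algebra over a field F of characteristic p > 0, let φ : g × g → F be a 2-cocycle with trivial coefficients, and let h, z ∈ g be elements such that [z, x] = (ad h)ᵖ(x) for all x ∈ g (so z plays the role of the p-th power h^[p] of h in a restricted Lie algebra). Then φ(x, z) = φ((ad h)^{p−1}(x), h) for all x ∈ g; that is, φ(x, h^[p]) − φ([x, h, …, h], h) = 0 with h repeated p − 1 times. (This expresses that the Hochschild map Δ : H²(g, F) → Hom_fr(g, H¹(g, F)) is the zero map, since H¹(g, F) = 0 for simple g.) -/

import Mathlib

/-!
The cocycle identity reads `φ(w, [u, v]) = Φ(w • (u ⊗ v))`, where `Φ` is the linear map on `L ⊗ L`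
induced by `φ` and `L` acts diagonally on `L ⊗ L`. In characteristic `p`, the two commuting summands
of the diagonal action of `h` can be raised to the `p`-th power separately, so `ad z = (ad h)ᵖ`
implies that `z` also acts on `L ⊗ L` as the `p`-th power of `h`. As the bracket `π : L ⊗ L → L` is
`L`-equivariant, `φ(z, π t) = Φ(hᵖ • t) = Φ(h • hᵖ⁻¹ • t) = φ(h, (ad h)ᵖ⁻¹ (π t))`; and `π` is
surjective because a simple Lie algebra is perfect.
-/

open scoped TensorProduct

open LieModule (toEnd toModuleHom)

theorem add_pow_char_of_commute_of_algebra (R : Type*) {A : Type*} [CommSemiring R] [Semiring A]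
    [Algebra R A] (p : ℕ) [Fact p.Prime] [CharP R p] {x y : A} (hxy : Commute x y) :
    (x + y) ^ p = x ^ p + y ^ p := by
  obtain ⟨r, hr⟩ := hxy.exists_add_pow_prime_eq (Fact.out : p.Prime)
  have hp : (p : A) = 0 := by rw [← map_natCast (algebraMap R A), CharP.cast_eq_zero, map_zero]
  simpa [hp] using hr

section LieModule

variable {R L M N : Type*} [CommRing R] [LieRing L] [LieAlgebra R L]
  [AddCommGroup M] [Module R M] [LieRingModule L M] [LieModule R L M]
  [AddCommGroup N] [Module R N] [LieRingModule L N] [LieModule R L N]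

theorem toEnd_tensorProduct (x : L) :
    toEnd R L (M ⊗[R] N) x = (toEnd R L M x).rTensor N + (toEnd R L N x).lTensor M := by
  ext m n
  simp

theorem toEnd_tensorProduct_eq_pow_char (p : ℕ) [Fact p.Prime] [CharP R p] {h z : L}
    (hM : toEnd R L M z = toEnd R L M h ^ p) (hN : toEnd R L N z = toEnd R L N h ^ p) :
    toEnd R L (M ⊗[R] N) z = toEnd R L (M ⊗[R] N) h ^ p := by
  have hcomm : Commute ((toEnd R L M h).rTensor N) ((toEnd R L N h).lTensor M) :=
    (LinearMap.rTensor_comp_lTensor M _ _).trans (LinearMap.lTensor_comp_rTensor M _ _).symm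
  rw [toEnd_tensorProduct, toEnd_tensorProduct, add_pow_char_of_commute_of_algebra R p hcomm,
    LinearMap.rTensor_pow, LinearMap.lTensor_pow, hM, hN]

theorem toModuleHom_surjective_of_lie_top_eq_top
    (hM : ⁅(⊤ : LieIdeal R L), (⊤ : LieSubmodule R L M)⁆ = ⊤) :
    Function.Surjective (toModuleHom R L M) := by
  intro m
  have hm : m ∈ (⊤ : LieSubmodule R L M) := LieSubmodule.mem_top m
  rw [← hM, LieSubmodule.lieIdeal_oper_eq_tensor_map_range] at hm
  obtain ⟨t, rfl⟩ := hm
  exact ⟨_, rfl⟩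

end LieModule

theorem lie_top_eq_top_of_isSimple (R L : Type*) [CommRing R] [LieRing L] [LieAlgebra R L]
    [LieAlgebra.IsSimple R L] : ⁅(⊤ : LieIdeal R L), (⊤ : LieIdeal R L)⁆ = ⊤ := by
  refine lie_eq_self_of_isAtom_of_nonabelian ⊤ isAtom_top ?_
  rw [lie_abelian_iff_equiv_lie_abelian LieIdeal.topEquiv]
  exact LieAlgebra.IsSimple.non_abelian R

section Cocycle

variable {R L M : Type*} [CommRing R] [LieRing L] [LieAlgebra R L] [AddCommGroup M] [Module R M]
  {φ : L →ₗ[R] L →ₗ[R] M}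

theorem apply_lie_of_cyclic (halt : φ.IsAlt)
    (hcyc : ∀ x y w : L, φ ⁅x, y⁆ w + φ ⁅y, w⁆ x + φ ⁅w, x⁆ y = 0) (w x y : L) :
    φ w ⁅x, y⁆ = φ ⁅w, x⁆ y + φ x ⁅w, y⁆ := by
  have hwy : φ ⁅y, w⁆ x = φ x ⁅w, y⁆ := by
    rw [← lie_skew, map_neg, LinearMap.neg_apply, halt.neg]
  rw [← halt.neg, neg_eq_iff_add_eq_zero, ← hwy, ← hcyc x y w]
  abel

theorem lift_lie_eq_apply_toModuleHom (hφ : ∀ w x y : L, φ w ⁅x, y⁆ = φ ⁅w, x⁆ y + φ x ⁅w, y⁆)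
    (w : L) (t : L ⊗[R] L) :
    TensorProduct.lift φ ⁅w, t⁆ = φ w (toModuleHom R L L t) := by
  induction t with
  | zero => simp
  | tmul x y => simp [← hφ]
  | add s t hs ht => simp only [lie_add, map_add, hs, ht]

theorem apply_eq_apply_ad_pow_sub_one (p : ℕ) [Fact p.Prime] [CharP R p]
    (hφ : ∀ w x y : L, φ w ⁅x, y⁆ = φ ⁅w, x⁆ y + φ x ⁅w, y⁆)
    (hL : ⁅(⊤ : LieIdeal R L), (⊤ : LieIdeal R L)⁆ = ⊤) {h z : L}
    (hz : LieAlgebra.ad R L z = LieAlgebra.ad R L h ^ p) (x : L) :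
    φ z x = φ h ((LieAlgebra.ad R L h ^ (p - 1)) x) := by
  obtain ⟨t, rfl⟩ := toModuleHom_surjective_of_lie_top_eq_top hL x
  have hzt : ⁅z, t⁆ = ⁅h, (toEnd R L (L ⊗[R] L) h ^ (p - 1)) t⁆ := by
    rw [← LieModule.toEnd_apply_apply R, toEnd_tensorProduct_eq_pow_char p hz hz,
      ← mul_pow_sub_one (Fact.out : p.Prime).ne_zero, Module.End.mul_apply,
      LieModule.toEnd_apply_apply]
  calc φ z (toModuleHom R L L t)
      = TensorProduct.lift φ ⁅z, t⁆ := (lift_lie_eq_apply_toModuleHom hφ z t).symm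
    _ = TensorProduct.lift φ ⁅h, (toEnd R L (L ⊗[R] L) h ^ (p - 1)) t⁆ := by rw [hzt]
    _ = φ h (toModuleHom R L L ((toEnd R L (L ⊗[R] L) h ^ (p - 1)) t)) :=
      lift_lie_eq_apply_toModuleHom hφ h _
    _ = φ h ((LieAlgebra.ad R L h ^ (p - 1)) (toModuleHom R L L t)) :=
      congrArg (φ h) (LieModule.toEnd_pow_apply_map _ _ _ _).symm

end Cocycle

theorem hochschild_delta_is_zero_of_simple_general
    {R L M : Type*} [CommRing R] [LieRing L] [LieAlgebra R L] [AddCommGroup M] [Module R M]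
    (hL : ⁅(⊤ : LieIdeal R L), (⊤ : LieIdeal R L)⁆ = ⊤)
    (p : ℕ) [Fact p.Prime] [CharP R p]
    (φ : L →ₗ[R] L →ₗ[R] M)
    (halt : φ.IsAlt)
    (hcoc : ∀ x y w : L, φ ⁅x, y⁆ w + φ ⁅y, w⁆ x + φ ⁅w, x⁆ y = 0)
    (h z : L)
    (hz : ∀ x : L, ⁅z, x⁆ = ((LieAlgebra.ad R L h) ^ p) x) (x : L) :
    φ x z = φ (((LieAlgebra.ad R L h) ^ (p - 1)) x) h := by
  rw [← halt.neg z, ← halt.neg h,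
    apply_eq_apply_ad_pow_sub_one p (apply_lie_of_cyclic halt hcoc) hL (LinearMap.ext hz)]

/-- Let `g` be a simple Lie algebra over a field `F` of characteristic `p > 0`, let `φ`
be a 2-cocycle with trivial coefficients (an alternating bilinear form satisfying the
cocycle identity), and let `h z : g` satisfy `⁅z, x⁆ = (ad h)^p x` for all `x`
(so `z` plays the role of `h^[p]`). Then `φ(x, z) = φ((ad h)^(p−1) x, h)` for all
`x`; i.e. the Hochschild map `Δ` is zero since `H¹(g, F) = 0`. -/
theorem hochschild_delta_is_zero_of_simple
    {F L : Type*} [Field F] [LieRing L] [LieAlgebra F L]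
    [LieAlgebra.IsSimple F L]
    (p : ℕ) [CharP F p] (hp : 0 < p)
    (φ : L →ₗ[F] L →ₗ[F] F)
    (halt : ∀ x : L, φ x x = 0)
    (hcoc : ∀ x y w : L, φ ⁅x, y⁆ w + φ ⁅y, w⁆ x + φ ⁅w, x⁆ y = 0)
    (h z : L)
    (hz : ∀ x : L, ⁅z, x⁆ = ((LieAlgebra.ad F L h) ^ p) x) :
    ∀ x : L, φ x z = φ (((LieAlgebra.ad F L h) ^ (p - 1)) x) h := by
  have : NeZero p := ⟨hp.ne'⟩
  have : Fact p.Prime := CharP.char_is_prime_of_pos F p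
  exact hochschild_delta_is_zero_of_simple_general (lie_top_eq_top_of_isSimple F L)
    p φ halt hcoc h z hz
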